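/- Let (X,μ) and (Y,ν) be standard Borel spaces with finite Borel measures, and let f : X → ℝ and g : Y → ℝ be Borel maps such that f is non-atomic, i.e. f is not μ-essentially constant on any measurable subset of X of positive measure. Then for every ε > 0 there exist finitely many pairwise disjoint Borel sets C_1,…,C_N ⊆ ℝ with ∪_{j=1}^N C_j = ℝ such that, putting α_j = f^{-1}(C_j) and β_j = g^{-1}(C_j), one has {(x,y) ∈ X × Y : f(x) = g(y)} ⊆ ∪_{j=1}^N α_j × β_j and min(μ(α_j), ν(β_j)) < ε for every j. -/

import Mathlib

open MeasureTheory

/-!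
The push-forward `m = μ.map f` is a finite Borel measure on `ℝ` without atoms, and it suffices to
partition `ℝ` into finitely many Borel sets of `m`-measure less than `ε`: then already every
`μ(α_j)` is less than `ε`, and the covering of `{f(x) = g(y)}` holds for any partition of `ℝ`.
By tightness the complement of some compact set `K` is `m`-small, by
outer regularity every point has an open neighbourhood of small `m`-measure, and finitely many of
these cover `K`. Making this finite cover of `ℝ` disjoint gives the partition.
-/

theorem exists_fin_partition_measure_lt (m : Measure ℝ) [IsFiniteMeasure m] [NullSingletonClass m]
    {δ : ENNReal} (hδ : δ ≠ 0) :
    ∃ (N : ℕ) (C : Fin N → Set ℝ), (∀ j, MeasurableSet (C j)) ∧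
      Pairwise (Function.onFun Disjoint C) ∧ (⋃ j, C j) = Set.univ ∧ ∀ j, m (C j) < δ := by
  obtain ⟨K, -, hK, hKδ⟩ := MeasurableSet.univ.exists_isCompact_sdiff_lt
    (measure_ne_top m Set.univ) hδ
  rw [← Set.compl_eq_univ_sdiff] at hKδ
  have hU (x : ℝ) : ∃ U : Set ℝ, {x} ⊆ U ∧ IsOpen U ∧ m U < δ :=
    Set.exists_isOpen_lt_of_lt {x} δ (by simpa using pos_iff_ne_zero.2 hδ)
  choose U hxU hUo hUδ using hU
  obtain ⟨t, -, ht⟩ := hK.elim_nhds_subcover U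
    fun x _ ↦ (hUo x).mem_nhds (hxU x rfl)
  let D : Fin (t.card + 1) → Set ℝ := Fin.cons Kᶜ fun i ↦ U (t.equivFin.symm i)
  have hDm (j) : MeasurableSet (D j) := by
    refine Fin.cases ?_ (fun i ↦ ?_) j
    · exact hK.measurableSet.compl
    · exact (hUo _).measurableSet
  have hDδ (j) : m (D j) < δ := by
    refine Fin.cases ?_ (fun i ↦ ?_) j
    · exact hKδ
    · exact hUδ _
  refine ⟨_, disjointed D, fun j ↦ ?_, disjoint_disjointed D, ?_,
    fun j ↦ (measure_mono (disjointed_subset D j)).trans_lt (hDδ j)⟩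
  · exact disjointedRec (fun _ _ h ↦ h.diff (hDm _)) (hDm j)
  · rw [iUnion_disjointed, Set.eq_univ_iff_forall]
    intro x
    by_cases hx : x ∈ K
    · obtain ⟨y, hy, hxy⟩ := Set.mem_iUnion₂.1 (ht hx)
      exact Set.mem_iUnion.2 ⟨(t.equivFin ⟨y, hy⟩).succ, by simpa [D] using hxy⟩
    · exact Set.mem_iUnion.2 ⟨0, hx⟩

/-- If `f : X → ℝ` and `g : Y → ℝ` are Borel maps on finite standard
Borel measure spaces and `f` is non-atomic (not essentially constant on any set of
positive measure), then for every `ε > 0` there is a finite Borel partition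
`ℝ = C_1 ∪ … ∪ C_N` such that, with `α_j = f⁻¹(C_j)` and `β_j = g⁻¹(C_j)`, the set
`{f(x) = g(y)}` is covered by `∪_j α_j × β_j` and `min(μ(α_j), ν(β_j)) < ε` for all
`j`. -/
theorem stmt_11
    {X Y : Type*} [MeasurableSpace X] [StandardBorelSpace X]
    [MeasurableSpace Y] [StandardBorelSpace Y]
    (μ : Measure X) (ν : Measure Y) [IsFiniteMeasure μ] [IsFiniteMeasure ν]
    (f : X → ℝ) (g : Y → ℝ) (hf : Measurable f) (hg : Measurable g)
    (hna : ∀ A : Set X, MeasurableSet A → μ A ≠ 0 →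
      ¬ ∃ c : ℝ, ∀ᵐ x ∂μ.restrict A, f x = c)
    (ε : ℝ) (hε : 0 < ε) :
    ∃ (N : ℕ) (C : Fin N → Set ℝ),
      (∀ j, MeasurableSet (C j)) ∧
      Pairwise (Function.onFun Disjoint C) ∧
      (⋃ j, C j) = Set.univ ∧
      {p : X × Y | f p.1 = g p.2} ⊆ ⋃ j, (f ⁻¹' C j) ×ˢ (g ⁻¹' C j) ∧
      ∀ j, min (μ (f ⁻¹' C j)) (ν (g ⁻¹' C j)) < ENNReal.ofReal ε := by
  have : NullSingletonClass (μ.map f) := by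
    refine ⟨fun c ↦ ?_⟩
    have hc : MeasurableSet (f ⁻¹' {c}) := hf (measurableSet_singleton c)
    rw [Measure.map_apply hf (measurableSet_singleton c)]
    by_contra h
    exact hna _ hc h ⟨c, ae_restrict_of_forall_mem hc fun x hx ↦ hx⟩
  obtain ⟨N, C, hCm, hCd, hCu, hCε⟩ := exists_fin_partition_measure_lt (μ.map f)
    (ENNReal.ofReal_pos.2 hε).ne'
  refine ⟨N, C, hCm, hCd, hCu, ?_, fun j ↦ ?_⟩
  · rintro ⟨x, y⟩ (hxy : f x = g y)
    obtain ⟨j, hj⟩ := Set.mem_iUnion.1 (hCu.symm ▸ Set.mem_univ (f x))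
    exact Set.mem_iUnion.2 ⟨j, hj, (hxy ▸ hj : g y ∈ C j)⟩
  · rw [← Measure.map_apply hf (hCm j)]
    exact min_lt_of_left_lt (hCε j)
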